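/- arXiv:0805.3149 — 2 statements merged into one kernel-verified Lean document; each statement's English description precedes it below -/
import Mathlib

section
/- Let Assumption A1(0) hold (bounded coefficients) and suppose χ_λ≥0 for all λ∈Λ₁. Let v be a bounded function on H_T such that the partial derivative D_t v exists in H_T, let F be a nonnegative integrable function on [0,T], and let C be a nonnegative bounded function on H_T with ν := sup_{H_T}(C−c) < 0. If D_t v ≤ L_h v + C·v̄₊ + F holds at every point of H_T, where v̄(t):=sup_{x∈ℝ^d} v(t,x) and a₊:=(|a|+a)/2, then for all t∈[0,T]: v̄(t) ≤ v̄₊(0) + |ν|^{-1}·sup_{[0,t]}F. -/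
open scoped BigOperators
open MeasureTheory

noncomputable section

/-- `ℝ^d` with Euclidean norm. -/
abbrev Vec (d : ℕ) := EuclideanSpace ℝ (Fin d)

namespace GK

variable {d : ℕ}

/-- forward difference `δ_{h,λ}φ`. -/
def del (h : ℝ) (l : Vec d) (φ : Vec d → ℝ) (x : Vec d) : ℝ :=
  (φ (x + h • l) - φ x) / h

/-- symmetric second difference `Δ_{h,λ}φ`. -/
def del2 (h : ℝ) (l : Vec d) (φ : Vec d → ℝ) (x : Vec d) : ℝ :=
  (φ (x + h • l) - 2 * φ x + φ (x - h • l)) / h ^ 2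

/-- `i`-th partial derivative `D_iφ`. -/
def pd (i : Fin d) (φ : Vec d → ℝ) (x : Vec d) : ℝ :=
  fderiv ℝ φ x (EuclideanSpace.single i 1)

/-- second partial derivatives `D_{ij}φ`. -/
def pd2 (i j : Fin d) (φ : Vec d → ℝ) (x : Vec d) : ℝ :=
  iteratedFDeriv ℝ 2 φ x ![EuclideanSpace.single i 1, EuclideanSpace.single j 1]

/-- The index type for `Λ = Λ₁ ∪ Λ₂`: `Sum.inl` is an element of `Λ₁`,
`Sum.inr i` stands for the vector `ℓⁱ ∈ Λ₂`. -/
abbrev Dir (L1 : Finset (Vec d)) : Type _ := {l : Vec d // l ∈ L1} ⊕ Fin d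

/-- the subtype of elements of `Λ₁`. -/
abbrev L1t (L1 : Finset (Vec d)) := {l : Vec d // l ∈ L1}

/-- the weighted difference operator `δ̄_{h,λ}`, `λ ∈ Λ`:
`τ_λ δ_{h,λ}` on `Λ₁` and `τ₀ D_i` on `Λ₂`. -/
def dbar (h τ₀ : ℝ) (τ : Vec d → ℝ) {L1 : Finset (Vec d)} :
    Dir L1 → (Vec d → ℝ) → Vec d → ℝ
  | Sum.inl l => fun φ x => τ l.1 * del h l.1 φ x
  | Sum.inr i => fun φ x => τ₀ * pd i φ x

/-- the shift operator `T_{h,λ}`, `λ ∈ Λ`: a genuine shift on `Λ₁`, the identity on `Λ₂`. -/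
def shiftD (h : ℝ) {L1 : Finset (Vec d)} : Dir L1 → (Vec d → ℝ) → Vec d → ℝ
  | Sum.inl l => fun φ x => φ (x + h • l.1)
  | Sum.inr _ => fun φ x => φ x

/-- `δ̄_{h,λ}` for a multivector `λ ∈ Λᵏ`. -/
def dbarT (h τ₀ : ℝ) (τ : Vec d → ℝ) {L1 : Finset (Vec d)} {k : ℕ}
    (lam : Fin k → Dir L1) (φ : Vec d → ℝ) : Vec d → ℝ :=
  (List.ofFn lam).foldr (fun a ψ => dbar h τ₀ τ a ψ) φ

/-- `T_{h,λ}` for a multivector `λ ∈ Λᵏ`. -/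
def shiftT (h : ℝ) {L1 : Finset (Vec d)} {k : ℕ}
    (lam : Fin k → Dir L1) (φ : Vec d → ℝ) : Vec d → ℝ :=
  (List.ofFn lam).foldr (fun a ψ => shiftD h a ψ) φ

/-- `|Λ₁|² = Σ_{λ∈Λ₁} |λ|²`. -/
def normL1sq (L1 : Finset (Vec d)) : ℝ := ∑ l ∈ L1, ‖l‖ ^ 2

/-- `‖Λ₁‖² = Σ_{λ∈Λ₁} |τ_λ λ|²`. -/
def wnormL1sq (L1 : Finset (Vec d)) (τ : Vec d → ℝ) : ℝ := ∑ l ∈ L1, ‖τ l • l‖ ^ 2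

/-- the operator `L⁰_h` (at a fixed time, `qt μ`, `pt μ` being the coefficients
as functions of `x`). -/
def L0 (h : ℝ) (L1 : Finset (Vec d)) (qt pt : Vec d → Vec d → ℝ)
    (φ : Vec d → ℝ) (x : Vec d) : ℝ :=
  h⁻¹ * ∑ l ∈ L1, qt l x * del h l φ x + ∑ l ∈ L1, pt l x * del h l φ x

/-- the quadratic form `𝒬(φ) = Σ_{μ∈Λ₁} χ_μ (δ_{h,μ}φ)²`, `χ_μ = q_μ + h p_μ`. -/
def Qform (h : ℝ) (L1 : Finset (Vec d)) (qt pt : Vec d → Vec d → ℝ)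
    (φ : Vec d → ℝ) (x : Vec d) : ℝ :=
  ∑ l ∈ L1, (qt l x + h * pt l x) * (del h l φ x) ^ 2

/-- `Q_μ φ = h⁻¹ Σ_{λ∈Λ₁} (δ̄_{h,μ} q_λ) δ_{h,λ}φ` for a multivector `μ`. -/
def Qmu (h τ₀ : ℝ) (τ : Vec d → ℝ) (L1 : Finset (Vec d)) {k : ℕ}
    (qt : Vec d → Vec d → ℝ) (lam : Fin k → Dir L1) (φ : Vec d → ℝ) (x : Vec d) : ℝ :=
  h⁻¹ * ∑ l ∈ L1, dbarT h τ₀ τ lam (qt l) x * del h l φ x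

/-- `P_μ φ = Σ_{λ∈Λ₁} (δ̄_{h,μ} p_λ) δ_{h,λ}φ` for a multivector `μ`. -/
def Pmu (h τ₀ : ℝ) (τ : Vec d → ℝ) (L1 : Finset (Vec d)) {k : ℕ}
    (pt : Vec d → Vec d → ℝ) (lam : Fin k → Dir L1) (φ : Vec d → ℝ) (x : Vec d) : ℝ :=
  ∑ l ∈ L1, dbarT h τ₀ τ lam (pt l) x * del h l φ x

/-- `L⁰_μ = Q_μ + P_μ`. -/
def L0mu (h τ₀ : ℝ) (τ : Vec d → ℝ) (L1 : Finset (Vec d)) {k : ℕ}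
    (qt pt : Vec d → Vec d → ℝ) (lam : Fin k → Dir L1) (φ : Vec d → ℝ) (x : Vec d) : ℝ :=
  Qmu h τ₀ τ L1 qt lam φ x + Pmu h τ₀ τ L1 pt lam φ x

/-- `A₁(φ) = 2 Σ_{λ∈Λ} (δ̄_{h,λ}φ) L⁰_λ T_{h,λ}φ`. -/
def A1form (h τ₀ : ℝ) (τ : Vec d → ℝ) (L1 : Finset (Vec d))
    (qt pt : Vec d → Vec d → ℝ) (φ : Vec d → ℝ) (x : Vec d) : ℝ :=
  2 * ∑ a : Dir L1, dbar h τ₀ τ a φ x * L0mu h τ₀ τ L1 qt pt ![a] (shiftD h a φ) x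

/-- membership in the class `𝔎` of bounded operators on bounded Borel functions
preserving the cone of nonnegative functions and with `𝒦1 ≤ 1`. -/
def MemFrakK (K : (Vec d → ℝ) → Vec d → ℝ) : Prop :=
  (∀ φ : Vec d → ℝ, Measurable φ → Bornology.IsBounded (Set.range φ) →
      Measurable (K φ) ∧ Bornology.IsBounded (Set.range (K φ))) ∧
  (∀ φ : Vec d → ℝ, (∀ x, 0 ≤ φ x) → ∀ x, 0 ≤ K φ x) ∧
  ∀ x, K (fun _ => (1 : ℝ)) x ≤ 1

/-- inequality (3.24.1) of Assumption 2.4 (A4), at a fixed time. -/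
def IneqA4 (h τ₀ : ℝ) (τ : Vec d → ℝ) (L1 : Finset (Vec d))
    (qt pt : Vec d → Vec d → ℝ) (ct : Vec d → ℝ) (δ K₁ : ℝ) (m : ℕ)
    (K : (Vec d → ℝ) → Vec d → ℝ) (φ : Vec d → ℝ) (x : Vec d) : Prop :=
  (m : ℝ) * A1form h τ₀ τ L1 qt pt φ x ≤
    (1 - δ) * (∑ a : Dir L1, Qform h L1 qt pt (dbar h τ₀ τ a φ) x)
    + K₁ * Qform h L1 qt pt φ x
    + 2 * (1 - δ) * ct x * K (fun y => ∑ a : Dir L1, (dbar h τ₀ τ a φ y) ^ 2) x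

/-- inequality (3.24.01) of Assumption 2.5 (A5), at a fixed time. -/
def IneqA5 (h τ₀ : ℝ) (τ : Vec d → ℝ) (L1 : Finset (Vec d))
    (qt pt : Vec d → Vec d → ℝ) (ct : Vec d → ℝ) (δ K₁ : ℝ) (n : ℕ)
    (K : (Vec d → ℝ) → Vec d → ℝ) (φ : Vec d → ℝ) (x : Vec d) : Prop :=
  (n : ℝ) * (∑ a : Dir L1, A1form h τ₀ τ L1 qt pt (dbar h τ₀ τ a φ) x)
  + (n : ℝ) * ((n : ℝ) - 1) *
      (∑ lam : Fin 2 → Dir L1,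
        dbarT h τ₀ τ lam φ x * Qmu h τ₀ τ L1 qt lam (shiftT h lam φ) x)
  ≤ (1 - δ) * (∑ lam : Fin 2 → Dir L1, Qform h L1 qt pt (dbarT h τ₀ τ lam φ) x)
    + K₁ * (∑ a : Dir L1, Qform h L1 qt pt (dbar h τ₀ τ a φ) x)
    + 2 * (1 - δ) * ct x *
        K (fun y => ∑ lam : Fin 2 → Dir L1, (dbarT h τ₀ τ lam φ y) ^ 2) x
    + K₁ * K (fun y => ∑ a : Dir L1, (dbar h τ₀ τ a φ y) ^ 2) x

/-- regularity and boundedness of the coefficients `q, p, c` (the `q,p,c` part of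
Assumption 2.1 (A1(m))). -/
def CoefReg (T : ℝ) (L1 : Finset (Vec d)) (m : ℕ)
    (q p : Vec d → ℝ → Vec d → ℝ) (c : ℝ → Vec d → ℝ) (M : ℕ → ℝ) : Prop :=
  (∀ l ∈ L1, ∀ t ∈ Set.Icc (0 : ℝ) T, ContDiff ℝ (m : ℕ∞) (q l t) ∧ ContDiff ℝ (m : ℕ∞) (p l t)) ∧
  (∀ t ∈ Set.Icc (0 : ℝ) T, ContDiff ℝ (m : ℕ∞) (c t)) ∧
  (∀ k ≤ m, ∀ l ∈ L1,
    ContinuousOn (fun tx : ℝ × Vec d => iteratedFDeriv ℝ k (q l tx.1) tx.2)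
      (Set.Icc (0 : ℝ) T ×ˢ Set.univ) ∧
    ContinuousOn (fun tx : ℝ × Vec d => iteratedFDeriv ℝ k (p l tx.1) tx.2)
      (Set.Icc (0 : ℝ) T ×ˢ Set.univ)) ∧
  (∀ k ≤ m,
    ContinuousOn (fun tx : ℝ × Vec d => iteratedFDeriv ℝ k (c tx.1) tx.2)
      (Set.Icc (0 : ℝ) T ×ˢ Set.univ)) ∧
  (∀ k ≤ m, ∀ t ∈ Set.Icc (0 : ℝ) T, ∀ x,
    (∑ l ∈ L1, (‖iteratedFDeriv ℝ k (q l t) x‖ ^ 2 + ‖iteratedFDeriv ℝ k (p l t) x‖ ^ 2))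
      + ‖iteratedFDeriv ℝ k (c t) x‖ ^ 2 ≤ (M k) ^ 2)

/-- regularity of the free terms `f, g` (the `f,g` part of Assumption 2.1 (A1(m))). -/
def FreeReg (T : ℝ) (m : ℕ) (f : ℝ → Vec d → ℝ) (g : Vec d → ℝ) : Prop :=
  (∀ t ∈ Set.Icc (0 : ℝ) T, ContDiff ℝ (m : ℕ∞) (f t)) ∧
  (∀ k ≤ m,
    ContinuousOn (fun tx : ℝ × Vec d => iteratedFDeriv ℝ k (f tx.1) tx.2)
      (Set.Icc (0 : ℝ) T ×ˢ Set.univ)) ∧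
  ContDiff ℝ (m : ℕ∞) g

/-- `u` is a bounded continuous solution of the integral equation (2.1). -/
def IsSol (h T : ℝ) (L1 : Finset (Vec d)) (q p : Vec d → ℝ → Vec d → ℝ)
    (c : ℝ → Vec d → ℝ) (f : ℝ → Vec d → ℝ) (g : Vec d → ℝ)
    (u : ℝ → Vec d → ℝ) : Prop :=
  (∃ B, ∀ t ∈ Set.Icc (0 : ℝ) T, ∀ x, |u t x| ≤ B) ∧
  ContinuousOn (fun tx : ℝ × Vec d => u tx.1 tx.2) (Set.Icc (0 : ℝ) T ×ˢ Set.univ) ∧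
  ∀ t ∈ Set.Icc (0 : ℝ) T, ∀ x,
    u t x = g x + ∫ s in (0 : ℝ)..t,
      (L0 h L1 (fun l => q l s) (fun l => p l s) (u s) x - c s x * u s x + f s x)

/-- `sup_{H_T} ψ`. -/
def supHT (T : ℝ) (ψ : ℝ → Vec d → ℝ) : ℝ :=
  sSup {r : ℝ | ∃ t ∈ Set.Icc (0 : ℝ) T, ∃ x, r = ψ t x}

/-- `F_m = Σ_{k ≤ m} sup_{H_T} |Dᵏf|`. -/
def Fnorm (T : ℝ) (m : ℕ) (f : ℝ → Vec d → ℝ) : ℝ :=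
  ∑ k ∈ Finset.range (m + 1), supHT T fun t x => ‖iteratedFDeriv ℝ k (f t) x‖

/-- `G_m = Σ_{k ≤ m} sup_{ℝ^d} |Dᵏg|`. -/
def Gnorm (m : ℕ) (g : Vec d → ℝ) : ℝ :=
  ∑ k ∈ Finset.range (m + 1), sSup (Set.range fun x => ‖iteratedFDeriv ℝ k g x‖)

end GK

/-!
Let `S` be the supremum of `v` over the strip `[0,T] × X` and `A` the claimed bound. Since the
coefficients `χ_λ / h²` are nonnegative and bounded, `L_h v ≤ K (S - v)`; and wherever `v ≥ A` the
potential, the nonlocal term and `F` together contribute at most `(sup C) (S - v)`. Hence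
`D_t v ≤ R (S - v)` above the level `A`, so `S - v` cannot decay faster than exponentially:
`S - v ≥ (S - A) e^{-rT}` for any `r > R`. If `S > A`, the right-hand side is a positive constant,
contradicting the choice of `S`.
-/

theorem hasDerivAt_sub_mul_exp_neg (S D r a t : ℝ) :
    HasDerivAt (fun s => S - D * Real.exp (-(r * (s - a))))
      (r * (D * Real.exp (-(r * (t - a))))) t := by
  have hexp := ((((hasDerivAt_id t).sub_const a).const_mul r).neg.exp.const_mul D).const_sub S
  exact hexp.congr_deriv (by simp only [id, Pi.neg_apply]; ring)

theorem le_sub_mul_exp_of_deriv_lt_mul_sub {f f' : ℝ → ℝ} {a b A S r : ℝ}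
    (hAS : A < S) (hr : 0 ≤ r)
    (hf : ∀ t ∈ Set.Icc a b, HasDerivWithinAt f (f' t) (Set.Icc a b) t) (hfa : f a ≤ A)
    (hf' : ∀ t ∈ Set.Icc a b, A ≤ f t → f t < S → f' t < r * (S - f t)) :
    ∀ t ∈ Set.Icc a b, f t ≤ S - (S - A) * Real.exp (-(r * (t - a))) := by
  have hgap : 0 < S - A := sub_pos.mpr hAS
  refine fun t ht => image_le_of_deriv_right_lt_deriv_boundary
    (fun s hs => (hf s hs).continuousWithinAt)
    (fun s hs => (hf s (Set.Ico_subset_Icc_self hs)).mono_of_mem_nhdsWithin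
      (Icc_mem_nhdsGE_of_mem hs))
    (by simpa using hfa) (hasDerivAt_sub_mul_exp_neg S (S - A) r a) ?_ ht
  intro s hs hfs
  have hexp_pos := Real.exp_pos (-(r * (s - a)))
  have hexp_le : Real.exp (-(r * (s - a))) ≤ 1 :=
    Real.exp_le_one_iff.mpr (neg_nonpos.mpr (mul_nonneg hr (sub_nonneg.mpr hs.1)))
  have hslope := hf' s (Set.Ico_subset_Icc_self hs)
    (by rw [hfs]; linarith [mul_le_of_le_one_right hgap.le hexp_le])
    (by rw [hfs]; exact sub_lt_self S (mul_pos hgap hexp_pos))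
  rwa [hfs, sub_sub_cancel] at hslope

theorem le_of_deriv_le_mul_sub_upperBound {X : Type*} {v vt : ℝ → X → ℝ} {a b A R : ℝ}
    (hv : ∃ B, ∀ t ∈ Set.Icc a b, ∀ x, v t x ≤ B)
    (hvt : ∀ t ∈ Set.Icc a b, ∀ x,
      HasDerivWithinAt (fun s => v s x) (vt t x) (Set.Icc a b) t)
    (hva : ∀ x, v a x ≤ A)
    (hR : ∀ t ∈ Set.Icc a b, ∀ x M,
      (∀ y, v t y ≤ M) → A ≤ v t x → vt t x ≤ R * (M - v t x)) :
    ∀ t ∈ Set.Icc a b, ∀ x, v t x ≤ A := by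
  intro t₀ ht₀ x₀
  set S : ℝ := ⨆ z : Set.Icc a b × X, v z.1 z.2
  have hvS : ∀ t ∈ Set.Icc a b, ∀ x, v t x ≤ S := by
    obtain ⟨B, hB⟩ := hv
    have hbdd : BddAbove (Set.range fun z : Set.Icc a b × X => v z.1 z.2) :=
      ⟨B, Set.forall_mem_range.mpr fun z => hB z.1 z.1.2 z.2⟩
    exact fun t ht x => le_ciSup hbdd (⟨t, ht⟩, x)
  suffices hSA : S ≤ A from (hvS t₀ ht₀ x₀).trans hSA
  by_contra! hAS
  have hr : 0 ≤ |R| + 1 := by positivity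
  have hbarrier : ∀ t ∈ Set.Icc a b, ∀ x,
      v t x ≤ S - (S - A) * Real.exp (-((|R| + 1) * (b - a))) := by
    intro t ht x
    have hdecay := le_sub_mul_exp_of_deriv_lt_mul_sub hAS hr (fun s hs => hvt s hs x) (hva x)
      (fun s hs hA hS => (hR s hs x S (hvS s hs) hA).trans_lt
        (mul_lt_mul_of_pos_right (by linarith [le_abs_self R]) (sub_pos.mpr hS))) t ht
    refine hdecay.trans (sub_le_sub_left (mul_le_mul_of_nonneg_left ?_ (sub_pos.mpr hAS).le) S)
    gcongr
    exact ht.2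
  have hS_le : S ≤ S - (S - A) * Real.exp (-((|R| + 1) * (b - a))) :=
    haveI : Nonempty (Set.Icc a b × X) := ⟨(⟨t₀, ht₀⟩, x₀)⟩
    ciSup_le fun z => hbarrier z.1 z.1.2 z.2
  linarith [mul_pos (sub_pos.mpr hAS) (Real.exp_pos (-((|R| + 1) * (b - a))))]

/-- The maximum principle for an operator `L` on functions, in quantitative form: `L φ` is at
most `K` times the gap between any upper bound of `φ` and `φ`. The generator of a jump process has
this property when its total jump rate is at most `K`, hence the name. -/
def JumpRateLE {X : Type*} (L : (X → ℝ) → X → ℝ) (K : ℝ) : Prop :=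
  ∀ (φ : X → ℝ) (M : ℝ), (∀ y, φ y ≤ M) → ∀ x, L φ x ≤ K * (M - φ x)

theorem JumpRateLE.sub_mul_add_mul_iSup_le {X : Type*} {L : (X → ℝ) → X → ℝ} {φ : X → ℝ}
    {K B C c ν M : ℝ} {x : X} (hL : JumpRateLE L K) (hφ : ∀ y, φ y ≤ M) (hx : 0 ≤ φ x)
    (hC0 : 0 ≤ C) (hCB : C ≤ B) (hν : C - c ≤ ν) :
    L φ x - c * φ x + C * max (⨆ y, φ y) 0 ≤ (K + B) * (M - φ x) + ν * φ x := by
  have : Nonempty X := ⟨x⟩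
  have hsup : C * max (⨆ y, φ y) 0 ≤ C * M :=
    mul_le_mul_of_nonneg_left (max_le (ciSup_le hφ) (hx.trans (hφ x))) hC0
  have hpotential : (C - c) * φ x ≤ ν * φ x := mul_le_mul_of_nonneg_right hν hx
  have hgap : C * (M - φ x) ≤ B * (M - φ x) :=
    mul_le_mul_of_nonneg_right hCB (sub_nonneg.mpr (hφ x))
  linarith [hL φ M hφ x]

theorem sum_add_mul_le_of_sum_sq_add_sq_le {ι : Type*} {s : Finset ι} {q p : ι → ℝ} {h B : ℝ}
    (hB : ∑ i ∈ s, (q i ^ 2 + p i ^ 2) ≤ B) :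
    ∑ i ∈ s, (q i + h * p i) ≤ B + s.card * ((1 + h ^ 2) / 4) := by
  have hyoung : ∀ i, q i + h * p i ≤ q i ^ 2 + p i ^ 2 + (1 + h ^ 2) / 4 := fun i => by
    linarith [sq_nonneg (q i - 1 / 2), sq_nonneg (p i - h / 2)]
  calc ∑ i ∈ s, (q i + h * p i)
      ≤ ∑ i ∈ s, (q i ^ 2 + p i ^ 2 + (1 + h ^ 2) / 4) := Finset.sum_le_sum fun i _ => hyoung i
    _ = ∑ i ∈ s, (q i ^ 2 + p i ^ 2) + s.card * ((1 + h ^ 2) / 4) := by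
        rw [Finset.sum_add_distrib, Finset.sum_const, nsmul_eq_mul]
    _ ≤ B + s.card * ((1 + h ^ 2) / 4) := by gcongr

namespace GK

variable {d : ℕ} {h : ℝ} {L1 : Finset (Vec d)} {qt pt : Vec d → Vec d → ℝ}

theorem L0_eq_sum_div_sq (hh : h ≠ 0) (φ : Vec d → ℝ) (x : Vec d) :
    L0 h L1 qt pt φ x =
      ∑ l ∈ L1, (qt l x + h * pt l x) / h ^ 2 * (φ (x + h • l) - φ x) := by
  unfold L0 del
  rw [Finset.mul_sum, ← Finset.sum_add_distrib]
  refine Finset.sum_congr rfl fun l _ => ?_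
  field_simp

theorem jumpRateLE_L0 {κ : ℝ} (hh : h ≠ 0) (hχ : ∀ l ∈ L1, ∀ x, 0 ≤ qt l x + h * pt l x)
    (hκ : ∀ x, ∑ l ∈ L1, (qt l x + h * pt l x) ≤ κ) :
    JumpRateLE (L0 h L1 qt pt) (κ / h ^ 2) := by
  intro φ M hφ x
  calc L0 h L1 qt pt φ x
      = ∑ l ∈ L1, (qt l x + h * pt l x) / h ^ 2 * (φ (x + h • l) - φ x) :=
        L0_eq_sum_div_sq hh φ x
    _ ≤ ∑ l ∈ L1, (qt l x + h * pt l x) / h ^ 2 * (M - φ x) :=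
        Finset.sum_le_sum fun l hl => mul_le_mul_of_nonneg_left
          (sub_le_sub_right (hφ _) _) (div_nonneg (hχ l hl x) (sq_nonneg h))
    _ = (∑ l ∈ L1, (qt l x + h * pt l x)) / h ^ 2 * (M - φ x) := by
        rw [← Finset.sum_mul, Finset.sum_div]
    _ ≤ κ / h ^ 2 * (M - φ x) := by
        have hgap : 0 ≤ M - φ x := sub_nonneg.mpr (hφ x)
        gcongr
        exact hκ x

theorem jumpRateLE_L0_of_sum_sq_le {B : ℝ} (hh : h ≠ 0)
    (hχ : ∀ l ∈ L1, ∀ x, 0 ≤ qt l x + h * pt l x)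
    (hB : ∀ x, ∑ l ∈ L1, (qt l x ^ 2 + pt l x ^ 2) ≤ B) :
    JumpRateLE (L0 h L1 qt pt) ((B + L1.card * ((1 + h ^ 2) / 4)) / h ^ 2) :=
  jumpRateLE_L0 hh hχ fun x => sum_add_mul_le_of_sum_sq_add_sq_le (hB x)

end GK

theorem stmt4_general {X : Type*} [Nonempty X] {T K ν : ℝ} {L : ℝ → (X → ℝ) → X → ℝ}
    {v vt c C : ℝ → X → ℝ} {F : ℝ → ℝ}
    (hL : ∀ t ∈ Set.Icc 0 T, JumpRateLE (L t) K)
    (hv : ∃ B, ∀ t ∈ Set.Icc 0 T, ∀ x, v t x ≤ B)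
    (hvt : ∀ t ∈ Set.Icc 0 T, ∀ x,
      HasDerivWithinAt (fun s => v s x) (vt t x) (Set.Icc 0 T) t)
    (hC0 : ∀ t ∈ Set.Icc 0 T, ∀ x, 0 ≤ C t x)
    (hCb : ∃ B, ∀ t ∈ Set.Icc 0 T, ∀ x, C t x ≤ B)
    (hν : ν < 0) (hνb : ∀ t ∈ Set.Icc 0 T, ∀ x, C t x - c t x ≤ ν)
    (hineq : ∀ t ∈ Set.Icc 0 T, ∀ x,
      vt t x ≤ L t (v t) x - c t x * v t x + C t x * max (⨆ y, v t y) 0 + F t) :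
    ∀ t ∈ Set.Icc 0 T, ∀ SF : ℝ, 0 ≤ SF → (∀ s ∈ Set.Icc 0 t, F s ≤ SF) →
      (⨆ x, v t x) ≤ max (⨆ x, v 0 x) 0 + |ν|⁻¹ * SF := by
  intro t ht SF hSF0 hSF
  obtain ⟨B, hB⟩ := hv
  obtain ⟨BC, hBC⟩ := hCb
  have hsub : Set.Icc 0 t ⊆ Set.Icc 0 T := Set.Icc_subset_Icc_right ht.2
  have hSFν : 0 ≤ |ν|⁻¹ * SF := by positivity
  have hv0 : ∀ x, v 0 x ≤ max (⨆ x, v 0 x) 0 + |ν|⁻¹ * SF := fun x =>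
    have h0 : (0 : ℝ) ∈ Set.Icc 0 T := ⟨le_rfl, ht.1.trans ht.2⟩
    (le_ciSup ⟨B, Set.forall_mem_range.mpr (hB 0 h0)⟩ x).trans
      ((le_max_left _ 0).trans (le_add_of_nonneg_right hSFν))
  refine ciSup_le fun x => le_of_deriv_le_mul_sub_upperBound (R := K + BC)
    ⟨B, fun s hs => hB s (hsub hs)⟩ (fun s hs y => (hvt s (hsub hs) y).mono hsub) hv0 ?_
    t ⟨ht.1, le_rfl⟩ x
  intro s hs y M hM hy
  have hlevel : |ν|⁻¹ * SF ≤ v s y := (le_add_of_nonneg_left (le_max_right _ _)).trans hy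
  have hvy : 0 ≤ v s y := hSFν.trans hlevel
  have hdamp : ν * v s y + F s ≤ 0 := by
    rw [inv_mul_le_iff₀ (abs_pos.mpr hν.ne), abs_of_neg hν] at hlevel
    linarith [hSF s hs]
  linarith [hineq s (hsub hs) y, (hL s (hsub hs)).sub_mul_add_mul_iSup_le hM hvy
    (hC0 s (hsub hs) y) (hBC s (hsub hs) y) (hνb s (hsub hs) y)]

open GK in
/-- The discrete maximum principle (Lemma 3.1): if `D_t v ≤ L_h v + C v̄₊ + F` on `H_T`,
`χ_λ ≥ 0` and `sup(C−c) ≤ ν < 0`, then `v̄(t) ≤ v̄₊(0) + |ν|⁻¹ sup_{[0,t]} F`. -/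
theorem stmt4 {d : ℕ} (L1 : Finset (Vec d)) (hL1 : (0 : Vec d) ∉ L1)
    (h T : ℝ) (hh : 0 < h) (hT : 0 < T) (M₀ : ℝ)
    (q p : Vec d → ℝ → Vec d → ℝ) (c : ℝ → Vec d → ℝ)
    -- Assumption A1(0): continuity and boundedness of the coefficients
    (hqc : ∀ l ∈ L1,
      ContinuousOn (fun tx : ℝ × Vec d => q l tx.1 tx.2) (Set.Icc (0 : ℝ) T ×ˢ Set.univ) ∧
      ContinuousOn (fun tx : ℝ × Vec d => p l tx.1 tx.2) (Set.Icc (0 : ℝ) T ×ˢ Set.univ))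
    (hcc : ContinuousOn (fun tx : ℝ × Vec d => c tx.1 tx.2) (Set.Icc (0 : ℝ) T ×ˢ Set.univ))
    (hbd : ∀ t ∈ Set.Icc (0 : ℝ) T, ∀ x,
      (∑ l ∈ L1, ((q l t x) ^ 2 + (p l t x) ^ 2)) + (c t x) ^ 2 ≤ M₀ ^ 2)
    -- χ_λ ≥ 0
    (hχ : ∀ l ∈ L1, ∀ t ∈ Set.Icc (0 : ℝ) T, ∀ x, 0 ≤ q l t x + h * p l t x)
    -- v bounded with time derivative vt
    (v vt : ℝ → Vec d → ℝ)
    (hv : ∃ B : ℝ, ∀ t ∈ Set.Icc (0 : ℝ) T, ∀ x, |v t x| ≤ B)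
    (hvt : ∀ t ∈ Set.Icc (0 : ℝ) T, ∀ x, HasDerivAt (fun s => v s x) (vt t x) t)
    -- F nonnegative integrable on [0,T]
    (F : ℝ → ℝ) (hFi : MeasureTheory.IntegrableOn F (Set.Icc (0 : ℝ) T))
    (hF0 : ∀ t ∈ Set.Icc (0 : ℝ) T, 0 ≤ F t)
    -- C nonnegative and bounded, with sup(C − c) ≤ ν < 0
    (C : ℝ → Vec d → ℝ)
    (hC0 : ∀ t ∈ Set.Icc (0 : ℝ) T, ∀ x, 0 ≤ C t x)
    (hCb : ∃ B : ℝ, ∀ t ∈ Set.Icc (0 : ℝ) T, ∀ x, C t x ≤ B)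
    (ν : ℝ) (hν : ν < 0)
    (hνb : ∀ t ∈ Set.Icc (0 : ℝ) T, ∀ x, C t x - c t x ≤ ν)
    -- the differential inequality D_t v ≤ L_h v + C v̄₊ + F on H_T
    (hineq : ∀ t ∈ Set.Icc (0 : ℝ) T, ∀ x,
      vt t x ≤ L0 h L1 (fun l => q l t) (fun l => p l t) (v t) x - c t x * v t x
        + C t x * max (⨆ y, v t y) 0 + F t) :
    ∀ t ∈ Set.Icc (0 : ℝ) T, ∀ SF : ℝ, (∀ s ∈ Set.Icc (0 : ℝ) t, F s ≤ SF) →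
      (⨆ x, v t x) ≤ max (⨆ x, v 0 x) 0 + |ν|⁻¹ * SF := by
  intro t ht SF hSF
  have hSF0 : 0 ≤ SF := (hF0 0 ⟨le_rfl, hT.le⟩).trans (hSF 0 ⟨le_rfl, ht.1⟩)
  exact stmt4_general
    (fun s hs => jumpRateLE_L0_of_sum_sq_le hh.ne' (fun l hl => hχ l hl s hs) fun x =>
      (le_add_of_nonneg_right (sq_nonneg (c s x))).trans (hbd s hs x))
    (hv.imp fun B hB s hs x => (le_abs_self _).trans (hB s hs x))
    (fun s hs x => (hvt s hs x).hasDerivWithinAt) hC0 hCb hν hνb hineq t ht SF hSF0 hSF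
end
end

section
/- Suppose Assumptions A1(m), A2 and A3 hold with m≥2, that condition (S′) holds (Λ₁=−Λ₁ and Dq_λ=Dq_{−λ} for all λ∈Λ₁), that τ_λ>0 for every λ∈Λ₁, and that q_λ≥κ on H_T for a constant κ>0. Then for any δ∈(0,1) there exist τ₀>0, h₀′∈(0,h₀] and a constant K₁ such that for all h∈(0,h₀′] and all smooth φ, inequality (3.24.1) holds on H_T with the identity operator as 𝒦: m·A₁(φ) ≤ (1−δ)Σ_{λ∈Λ}𝒬(δ̄_{h,λ}φ) + K₁𝒬(φ) + 2(1−δ)c·Σ_{λ∈Λ}|δ̄_{h,λ}φ|². In particular Assumption A4 is satisfied. -/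
open scoped BigOperators
open MeasureTheory

noncomputable section

/-! At a fixed point put `S₁ = ∑ |δ_λ φ|`, `S₂ = ∑ |δ_λ δ_μ φ|` over `Λ₁` and `S₃ = ∑ |D_i φ|`.
Condition (S′) makes the coefficients `δ̄_λ q_μ` even in `μ`, so reflecting the sum turns the
singular term `h⁻¹ ∑ (δ̄_λ q_μ) δ_μ φ` into a combination of second differences, bounded uniformly
in `h`. Hence `A₁(φ) ≤ C (S₁ + S₂) (S₁ + τ₀² S₃)`. Nondegeneracy lets the right-hand side of the
inequality control `S₁²` (with the free constant `K₁`) and `S₂²`, while `c ≥ c₀` controls `τ₀² S₃²`.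
Young's inequality then absorbs `S₁ S₂`, and it absorbs `τ₀² S₂ S₃` once `τ₀` is small. -/

lemma exists_pos_forall_mem_le {ι : Type*} {s : Finset ι} {f : ι → ℝ} (hf : ∀ i ∈ s, 0 < f i) :
    ∃ ε > 0, ∀ i ∈ s, ε ≤ f i := by
  rcases s.eq_empty_or_nonempty with rfl | hs
  · exact ⟨1, one_pos, by simp⟩
  · obtain ⟨i, hi, hmin⟩ := s.exists_min_image f hs
    exact ⟨f i, hf i hi, hmin⟩

lemma sq_sum_abs_div_card_add_one_le {ι : Type*} (s : Finset ι) (f : ι → ℝ) :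
    (∑ i ∈ s, |f i|) ^ 2 / (s.card + 1) ≤ ∑ i ∈ s, f i ^ 2 := by
  have cauchy_schwarz : (∑ i ∈ s, |f i|) ^ 2 ≤ s.card * ∑ i ∈ s, |f i| ^ 2 :=
    sq_sum_le_card_mul_sum_sq
  simp only [sq_abs] at cauchy_schwarz
  have sum_nonneg : 0 ≤ ∑ i ∈ s, f i ^ 2 := by positivity
  rw [div_le_iff₀ (by positivity)]
  linarith

lemma abs_sum_mul_le {ι : Type*} {s : Finset ι} {b : ι → ℝ} {C : ℝ} (hb : ∀ i ∈ s, |b i| ≤ C)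
    (f : ι → ℝ) : |∑ i ∈ s, b i * f i| ≤ C * ∑ i ∈ s, |f i| := by
  rw [Finset.mul_sum]
  refine (Finset.abs_sum_le_sum_abs _ _).trans (Finset.sum_le_sum fun i hi => ?_)
  rw [abs_mul]
  exact mul_le_mul_of_nonneg_right (hb i hi) (abs_nonneg _)

lemma mul_le_mul_sq_add_sq_div {ε : ℝ} (hε : 0 < ε) (u v : ℝ) :
    u * v ≤ ε * v ^ 2 + u ^ 2 / (4 * ε) := by
  have young := two_mul_le_add_mul_sq (a := v) (b := u / 2) hε
  calc u * v = 2 * v * (u / 2) := by ring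
    _ ≤ ε * v ^ 2 + ε⁻¹ * (u / 2) ^ 2 := young
    _ = ε * v ^ 2 + u ^ 2 / (4 * ε) := by field_simp; ring

lemma exists_absorbing_constants {α β : ℝ} (hα : 0 < α) (hβ : 0 < β) (A W : ℝ) :
    ∃ τ₀ > 0, ∃ K ≥ 0, ∀ s₁ s₂ s₃ : ℝ,
      A * (s₁ + s₂) * (W * s₁ + τ₀ ^ 2 * s₃) ≤
        α * s₂ ^ 2 + K * s₁ ^ 2 + β * (τ₀ ^ 2 * s₃ ^ 2) := by
  set τ₀ := √(α * β / (A ^ 2 + 1))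
  have τ₀_sq : τ₀ ^ 2 = α * β / (A ^ 2 + 1) := Real.sq_sqrt (by positivity)
  refine ⟨τ₀, by positivity, A ^ 2 * W ^ 2 / α + α, by positivity, fun s₁ s₂ s₃ => ?_⟩
  have small : (A * τ₀) ^ 2 / (4 * β) ≤ α / 4 := by
    rw [mul_pow, τ₀_sq, div_le_iff₀ (by positivity), mul_div_assoc', div_le_iff₀ (by positivity)]
    nlinarith [mul_pos hα hβ]
  have first_order : A * W * s₁ * (s₁ + s₂) ≤
      α / 4 * (s₁ + s₂) ^ 2 + A ^ 2 * W ^ 2 / α * s₁ ^ 2 := by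
    refine (mul_le_mul_sq_add_sq_div (by positivity : 0 < α / 4) _ _).trans_eq ?_
    field_simp
  have gradient : A * τ₀ * (s₁ + s₂) * (τ₀ * s₃) ≤
      β * (τ₀ ^ 2 * s₃ ^ 2) + α / 4 * (s₁ + s₂) ^ 2 :=
    calc A * τ₀ * (s₁ + s₂) * (τ₀ * s₃)
        ≤ β * (τ₀ * s₃) ^ 2 + (A * τ₀ * (s₁ + s₂)) ^ 2 / (4 * β) :=
          mul_le_mul_sq_add_sq_div hβ _ _
      _ = β * (τ₀ ^ 2 * s₃ ^ 2) + (A * τ₀) ^ 2 / (4 * β) * (s₁ + s₂) ^ 2 := by ring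
      _ ≤ β * (τ₀ ^ 2 * s₃ ^ 2) + α / 4 * (s₁ + s₂) ^ 2 := by gcongr
  have sq_add_le : (s₁ + s₂) ^ 2 ≤ 2 * (s₁ ^ 2 + s₂ ^ 2) := add_sq_le
  have absorbed := mul_le_mul_of_nonneg_left sq_add_le (by positivity : 0 ≤ α / 2)
  linarith

namespace GK

variable {d : ℕ} {L1 : Finset (Vec d)} {h : ℝ}

/-- `∑_{λ ∈ Λ₁} |δ_{h,λ} φ|`, the pointwise size of the first differences. -/
def sumAbsDel (h : ℝ) (L1 : Finset (Vec d)) (φ : Vec d → ℝ) (x : Vec d) : ℝ :=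
  ∑ l ∈ L1, |del h l φ x|

/-- `∑_{λ, μ ∈ Λ₁} |δ_{h,λ} δ_{h,μ} φ|`, the pointwise size of the second differences. -/
def sumAbsDelDel (h : ℝ) (L1 : Finset (Vec d)) (φ : Vec d → ℝ) (x : Vec d) : ℝ :=
  ∑ k ∈ L1, sumAbsDel h L1 (del h k φ) x

/-- `∑_i |D_i φ|`, the pointwise size of the gradient. -/
def sumAbsPd (φ : Vec d → ℝ) (x : Vec d) : ℝ :=
  ∑ i, |pd i φ x|

/-- The length `|τ_λ λ|` of a weighted direction, by which `δ̄_{h,λ}` inflates Lipschitz constants.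
The vectors of `Λ₂` carry the weight `τ₀` and count as unit vectors, since `δ̄_{h,ℓⁱ} = τ₀ D_i`. -/
def dirNorm (τ₀ : ℝ) (τ : Vec d → ℝ) : Dir L1 → ℝ
  | Sum.inl l => ‖τ l.1 • l.1‖
  | Sum.inr _ => |τ₀|

/-- The time-independent hypotheses on the coefficients at one instant: `q` and `p` have gradients
bounded by `B`, `|p| ≤ P`, the gradients of `q` are even in the direction as in (S′), and `q ≥ κ`,
`c ≥ c₀`. -/
structure SymmNondegCoeff (L1 : Finset (Vec d)) (κ c₀ P B : ℝ) (q p : Vec d → Vec d → ℝ)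
    (c : Vec d → ℝ) : Prop where
  differentiable_q : ∀ l ∈ L1, Differentiable ℝ (q l)
  differentiable_p : ∀ l ∈ L1, Differentiable ℝ (p l)
  norm_fderiv_q_le : ∀ l ∈ L1, ∀ x, ‖fderiv ℝ (q l) x‖ ≤ B
  norm_fderiv_p_le : ∀ l ∈ L1, ∀ x, ‖fderiv ℝ (p l) x‖ ≤ B
  abs_p_le : ∀ l ∈ L1, ∀ x, |p l x| ≤ P
  fderiv_q_neg : ∀ l ∈ L1, ∀ x, fderiv ℝ (q (-l)) x = fderiv ℝ (q l) x
  le_q : ∀ l ∈ L1, ∀ x, κ ≤ q l x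
  le_c : ∀ x, c₀ ≤ c x

lemma sumAbsDel_nonneg (φ : Vec d → ℝ) (x : Vec d) : 0 ≤ sumAbsDel h L1 φ x :=
  Finset.sum_nonneg fun _ _ => abs_nonneg _

lemma abs_del_le_sumAbsDel {l : Vec d} (hl : l ∈ L1) (φ : Vec d → ℝ) (x : Vec d) :
    |del h l φ x| ≤ sumAbsDel h L1 φ x :=
  Finset.single_le_sum (f := fun l => |del h l φ x|) (fun _ _ => abs_nonneg _) hl

lemma sumAbsDelDel_nonneg (φ : Vec d → ℝ) (x : Vec d) : 0 ≤ sumAbsDelDel h L1 φ x :=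
  Finset.sum_nonneg fun _ _ => sumAbsDel_nonneg _ _

lemma sumAbsDel_del_le_sumAbsDelDel {k : Vec d} (hk : k ∈ L1) (φ : Vec d → ℝ) (x : Vec d) :
    sumAbsDel h L1 (del h k φ) x ≤ sumAbsDelDel h L1 φ x :=
  Finset.single_le_sum (f := fun k => sumAbsDel h L1 (del h k φ) x)
    (fun _ _ => sumAbsDel_nonneg _ _) hk

lemma del_const_mul (a : ℝ) (l : Vec d) (φ : Vec d → ℝ) (x : Vec d) :
    del h l (fun y => a * φ y) x = a * del h l φ x := by
  simp only [del]; ring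

lemma del_neg_del (l : Vec d) (φ : Vec d → ℝ) (x : Vec d) :
    del h (-l) (del h l φ) x = -(h⁻¹ * (del h l φ x + del h (-l) φ x)) := by
  have cancel : x + h • -l + h • l = x := by simp
  simp only [del, cancel]
  ring

lemma del_shift (hh : h ≠ 0) (l k : Vec d) (φ : Vec d → ℝ) (x : Vec d) :
    del h l (fun y => φ (y + h • k)) x = del h l φ x + h * del h l (del h k φ) x := by
  simp only [del]
  field_simp
  ring

lemma abs_inv_mul_sum_mul_del_le {b : Vec d → ℝ} {C : ℝ} (hneg : ∀ l ∈ L1, -l ∈ L1)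
    (hb_neg : ∀ l ∈ L1, b (-l) = b l) (hb : ∀ l ∈ L1, |b l| ≤ C) (φ : Vec d → ℝ) (x : Vec d) :
    |h⁻¹ * ∑ l ∈ L1, b l * del h l φ x| ≤ C / 2 * sumAbsDelDel h L1 φ x := by
  have reflect : ∑ l ∈ L1, b l * del h (-l) φ x = ∑ l ∈ L1, b l * del h l φ x :=
    Finset.sum_nbij' Neg.neg Neg.neg hneg hneg (by simp) (by simp)
      fun l hl => by rw [hb_neg l hl]
  have second_order : h⁻¹ * ∑ l ∈ L1, b l * del h l φ x =
      -(1 / 2) * ∑ l ∈ L1, b l * del h (-l) (del h l φ) x := by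
    have pair_up : ∑ l ∈ L1, b l * del h (-l) (del h l φ) x =
        -(h⁻¹ * (∑ l ∈ L1, b l * del h l φ x + ∑ l ∈ L1, b l * del h (-l) φ x)) := by
      rw [← Finset.sum_add_distrib, Finset.mul_sum, ← Finset.sum_neg_distrib]
      exact Finset.sum_congr rfl fun l _ => by rw [del_neg_del]; ring
    rw [pair_up, reflect]
    ring
  have sum_le : |∑ l ∈ L1, b l * del h (-l) (del h l φ) x| ≤ C * sumAbsDelDel h L1 φ x := by
    rw [sumAbsDelDel, Finset.mul_sum]
    refine (Finset.abs_sum_le_sum_abs _ _).trans (Finset.sum_le_sum fun l hl => ?_)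
    rw [abs_mul]
    exact mul_le_mul (hb l hl) (abs_del_le_sumAbsDel (hneg l hl) _ x) (abs_nonneg _)
      ((abs_nonneg _).trans (hb l hl))
  rw [second_order, abs_mul, abs_neg, abs_of_pos one_half_pos]
  linarith

section Operator

variable {b g : Vec d → Vec d → ℝ} {C : ℝ} {x : Vec d}

lemma abs_L0_le (hneg : ∀ l ∈ L1, -l ∈ L1) (hb_neg : ∀ l ∈ L1, b (-l) x = b l x)
    (hb : ∀ l ∈ L1, |b l x| ≤ C) (hg : ∀ l ∈ L1, |g l x| ≤ C) (φ : Vec d → ℝ) :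
    |L0 h L1 b g φ x| ≤ C * (sumAbsDel h L1 φ x + sumAbsDelDel h L1 φ x) := by
  have singular := abs_inv_mul_sum_mul_del_le (h := h) hneg hb_neg hb φ x
  have regular : |∑ l ∈ L1, g l x * del h l φ x| ≤ C * sumAbsDel h L1 φ x := abs_sum_mul_le hg _
  have halved_nonneg := (abs_nonneg _).trans singular
  refine (abs_add_le _ _).trans ?_
  linarith

lemma abs_mul_L0_le (hh : 0 < h) (hb : ∀ l ∈ L1, |b l x| ≤ C) (hg : ∀ l ∈ L1, |g l x| ≤ C)
    (ψ : Vec d → ℝ) : |h * L0 h L1 b g ψ x| ≤ (1 + h) * C * sumAbsDel h L1 ψ x := by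
  have expand : h * L0 h L1 b g ψ x =
      ∑ l ∈ L1, b l x * del h l ψ x + h * ∑ l ∈ L1, g l x * del h l ψ x := by
    rw [L0, mul_add, mul_inv_cancel_left₀ hh.ne']
  calc |h * L0 h L1 b g ψ x|
      ≤ |∑ l ∈ L1, b l x * del h l ψ x| + h * |∑ l ∈ L1, g l x * del h l ψ x| := by
        rw [expand]
        refine (abs_add_le _ _).trans_eq ?_
        rw [abs_mul, abs_of_pos hh]
    _ ≤ C * sumAbsDel h L1 ψ x + h * (C * sumAbsDel h L1 ψ x) :=
        add_le_add (abs_sum_mul_le hb _) (mul_le_mul_of_nonneg_left (abs_sum_mul_le hg _) hh.le)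
    _ = (1 + h) * C * sumAbsDel h L1 ψ x := by ring

lemma L0_shift (hh : h ≠ 0) (k : Vec d) (φ : Vec d → ℝ) :
    L0 h L1 b g (fun y => φ (y + h • k)) x = L0 h L1 b g φ x + h * L0 h L1 b g (del h k φ) x := by
  simp only [L0, del_shift hh, mul_add, Finset.sum_add_distrib, mul_left_comm _ h,
    ← Finset.mul_sum]
  ring

lemma abs_L0_shift_le (hh : 0 < h) (hneg : ∀ l ∈ L1, -l ∈ L1)
    (hb_neg : ∀ l ∈ L1, b (-l) x = b l x) (hb : ∀ l ∈ L1, |b l x| ≤ C)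
    (hg : ∀ l ∈ L1, |g l x| ≤ C) {k : Vec d} (hk : k ∈ L1) (φ : Vec d → ℝ) :
    |L0 h L1 b g (fun y => φ (y + h • k)) x| ≤
      (2 + h) * C * (sumAbsDel h L1 φ x + sumAbsDelDel h L1 φ x) := by
  have C_nonneg : 0 ≤ C := (abs_nonneg _).trans (hb k hk)
  have S₁_nonneg := sumAbsDel_nonneg (h := h) (L1 := L1) φ x
  calc |L0 h L1 b g (fun y => φ (y + h • k)) x|
      ≤ |L0 h L1 b g φ x| + |h * L0 h L1 b g (del h k φ) x| := by
        rw [L0_shift hh.ne']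
        exact abs_add_le _ _
    _ ≤ C * (sumAbsDel h L1 φ x + sumAbsDelDel h L1 φ x)
          + (1 + h) * C * sumAbsDel h L1 (del h k φ) x :=
        add_le_add (abs_L0_le hneg hb_neg hb hg φ) (abs_mul_L0_le hh hb hg _)
    _ ≤ C * (sumAbsDel h L1 φ x + sumAbsDelDel h L1 φ x)
          + (1 + h) * C * (sumAbsDel h L1 φ x + sumAbsDelDel h L1 φ x) := by
        gcongr
        linarith [sumAbsDel_del_le_sumAbsDelDel (h := h) hk φ x]
    _ = (2 + h) * C * (sumAbsDel h L1 φ x + sumAbsDelDel h L1 φ x) := by ring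

end Operator

section WeightedDifference

variable {τ₀ B : ℝ} {τ : Vec d → ℝ} {f : Vec d → ℝ}

lemma dirNorm_nonneg (a : Dir L1) : 0 ≤ dirNorm τ₀ τ a := by
  cases a
  · exact norm_nonneg _
  · exact abs_nonneg _

lemma abs_del_le (hf : Differentiable ℝ f) (hB : ∀ x, ‖fderiv ℝ f x‖ ≤ B) (hh : 0 < h)
    (l x : Vec d) : |del h l f x| ≤ B * ‖l‖ := by
  have mean_value : ‖f (x + h • l) - f x‖ ≤ B * ‖x + h • l - x‖ :=
    convex_univ.norm_image_sub_le_of_norm_fderiv_le (fun y _ => hf y) (fun y _ => hB y)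
      (Set.mem_univ x) (Set.mem_univ _)
  rw [add_sub_cancel_left, norm_smul, Real.norm_eq_abs, Real.norm_of_nonneg hh.le] at mean_value
  rw [del, abs_div, abs_of_pos hh, div_le_iff₀ hh]
  linarith

lemma abs_pd_le (hB : ∀ x, ‖fderiv ℝ f x‖ ≤ B) (i : Fin d) (x : Vec d) : |pd i f x| ≤ B := by
  have op_norm := (fderiv ℝ f x).le_opNorm (EuclideanSpace.single i 1)
  rw [PiLp.norm_single, norm_one, mul_one] at op_norm
  exact op_norm.trans (hB x)

lemma abs_dbar_le (hf : Differentiable ℝ f) (hB : ∀ x, ‖fderiv ℝ f x‖ ≤ B) (hh : 0 < h)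
    (a : Dir L1) (x : Vec d) : |dbar h τ₀ τ a f x| ≤ B * dirNorm τ₀ τ a := by
  rcases a with l | i
  · calc |dbar h τ₀ τ (Sum.inl l) f x| = |τ l.1| * |del h l.1 f x| := abs_mul _ _
      _ ≤ |τ l.1| * (B * ‖l.1‖) := by gcongr; exact abs_del_le hf hB hh _ _
      _ = B * ‖τ l.1 • l.1‖ := by rw [norm_smul, Real.norm_eq_abs]; ring
  · calc |dbar h τ₀ τ (Sum.inr i : Dir L1) f x| = |τ₀| * |pd i f x| := abs_mul _ _
      _ ≤ |τ₀| * B := by gcongr; exact abs_pd_le hB _ _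
      _ = B * |τ₀| := mul_comm _ _

lemma dbar_congr_fderiv {f₁ f₂ : Vec d → ℝ} (hf₁ : Differentiable ℝ f₁) (hf₂ : Differentiable ℝ f₂)
    (heq : ∀ x, fderiv ℝ f₁ x = fderiv ℝ f₂ x) (a : Dir L1) (x : Vec d) :
    dbar h τ₀ τ a f₁ x = dbar h τ₀ τ a f₂ x := by
  rcases a with l | i
  · have const_sub : (f₁ - f₂) (x + h • l.1) = (f₁ - f₂) x :=
      is_const_of_fderiv_eq_zero (hf₁.sub hf₂)
        (fun y => by rw [fderiv_sub (hf₁ y) (hf₂ y), heq y, sub_self]) _ _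
    have same_increment : f₁ (x + h • l.1) - f₁ x = f₂ (x + h • l.1) - f₂ x := by
      simp only [Pi.sub_apply] at const_sub
      linarith
    simp only [dbar, del, same_increment]
  · simp only [dbar, pd, heq x]

lemma L0mu_singleton (q p : Vec d → Vec d → ℝ) (a : Dir L1) (φ : Vec d → ℝ) (x : Vec d) :
    L0mu h τ₀ τ L1 q p ![a] φ x =
      L0 h L1 (fun l => dbar h τ₀ τ a (q l)) (fun l => dbar h τ₀ τ a (p l)) φ x := by
  simp only [L0mu, Qmu, Pmu, L0, dbarT, List.ofFn_succ, List.ofFn_zero, List.foldr_cons,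
    List.foldr_nil, Matrix.cons_val_zero]

lemma sum_dirNorm_mul_abs_dbar_le (φ : Vec d → ℝ) (x : Vec d) :
    ∑ a : Dir L1, dirNorm τ₀ τ a * |dbar h τ₀ τ a φ x| ≤
      (∑ l ∈ L1, ‖τ l • l‖ * |τ l|) * sumAbsDel h L1 φ x + τ₀ ^ 2 * sumAbsPd φ x := by
  rw [Fintype.sum_sum_type, Finset.sum_mul, ← Finset.sum_coe_sort L1, sumAbsPd, Finset.mul_sum]
  refine add_le_add (Finset.sum_le_sum fun l _ => ?_) (Finset.sum_le_sum fun i _ => ?_)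
  · simp only [dirNorm, dbar, abs_mul, ← mul_assoc]
    gcongr
    exact abs_del_le_sumAbsDel l.2 φ x
  · simp only [dirNorm, dbar, abs_mul, ← mul_assoc, abs_mul_abs_self, sq, le_refl]

end WeightedDifference

section Coercivity

variable {κ θ τ₀ : ℝ} {τ : Vec d → ℝ} {q p : Vec d → Vec d → ℝ} {x : Vec d}

lemma mul_sq_sumAbsDel_le_Qform (hκ : 0 ≤ κ) (hχ : ∀ l ∈ L1, κ ≤ q l x + h * p l x)
    (φ : Vec d → ℝ) :
    κ / (L1.card + 1) * sumAbsDel h L1 φ x ^ 2 ≤ Qform h L1 q p φ x :=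
  calc κ / (L1.card + 1) * sumAbsDel h L1 φ x ^ 2
      = κ * (sumAbsDel h L1 φ x ^ 2 / (L1.card + 1)) := by ring
    _ ≤ κ * ∑ l ∈ L1, del h l φ x ^ 2 := by
        gcongr
        exact sq_sum_abs_div_card_add_one_le _ _
    _ ≤ Qform h L1 q p φ x := by
        rw [Qform, Finset.mul_sum]
        exact Finset.sum_le_sum fun l hl => mul_le_mul_of_nonneg_right (hχ l hl) (sq_nonneg _)

lemma sumAbsDel_const_mul (a : ℝ) (φ : Vec d → ℝ) :
    sumAbsDel h L1 (fun y => a * φ y) x = |a| * sumAbsDel h L1 φ x := by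
  simp only [sumAbsDel, del_const_mul, abs_mul, Finset.mul_sum]

lemma mul_sq_sumAbsDelDel_le_sum_Qform (hκ : 0 ≤ κ) (hχ : ∀ l ∈ L1, κ ≤ q l x + h * p l x)
    (hθ : 0 ≤ θ) (hτ : ∀ l ∈ L1, θ ≤ τ l) (φ : Vec d → ℝ) :
    κ * θ ^ 2 / (L1.card + 1) ^ 2 * sumAbsDelDel h L1 φ x ^ 2 ≤
      ∑ a : Dir L1, Qform h L1 q p (dbar h τ₀ τ a φ) x := by
  have Qform_nonneg (ψ : Vec d → ℝ) : 0 ≤ Qform h L1 q p ψ x :=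
    Finset.sum_nonneg fun l hl => mul_nonneg (hκ.trans (hχ l hl)) (sq_nonneg _)
  have Qform_dbar (k : L1t L1) : κ / (L1.card + 1) * θ ^ 2 * sumAbsDel h L1 (del h k.1 φ) x ^ 2 ≤
      Qform h L1 q p (dbar h τ₀ τ (Sum.inl k) φ) x := by
    refine le_trans ?_ (mul_sq_sumAbsDel_le_Qform hκ hχ _)
    simp only [dbar, sumAbsDel_const_mul, mul_pow, sq_abs, ← mul_assoc]
    gcongr
    exact hτ k.1 k.2
  have cauchy_schwarz : sumAbsDelDel h L1 φ x ^ 2 / (L1.card + 1) ≤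
      ∑ k ∈ L1, sumAbsDel h L1 (del h k φ) x ^ 2 := by
    simpa only [sumAbsDelDel, abs_of_nonneg (sumAbsDel_nonneg _ _)] using
      sq_sum_abs_div_card_add_one_le L1 fun k => sumAbsDel h L1 (del h k φ) x
  calc κ * θ ^ 2 / (L1.card + 1) ^ 2 * sumAbsDelDel h L1 φ x ^ 2
      = κ / (L1.card + 1) * θ ^ 2 * (sumAbsDelDel h L1 φ x ^ 2 / (L1.card + 1)) := by
        field_simp
    _ ≤ κ / (L1.card + 1) * θ ^ 2 * ∑ k ∈ L1, sumAbsDel h L1 (del h k φ) x ^ 2 := by gcongr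
    _ ≤ ∑ k : L1t L1, Qform h L1 q p (dbar h τ₀ τ (Sum.inl k) φ) x := by
        rw [Finset.mul_sum, ← Finset.sum_coe_sort L1]
        exact Finset.sum_le_sum fun k _ => Qform_dbar k
    _ ≤ ∑ a : Dir L1, Qform h L1 q p (dbar h τ₀ τ a φ) x := by
        rw [Fintype.sum_sum_type]
        exact le_add_of_nonneg_right (Finset.sum_nonneg fun i _ => Qform_nonneg _)

lemma sq_mul_sq_sumAbsPd_le_sum_sq_dbar (φ : Vec d → ℝ) :
    τ₀ ^ 2 * sumAbsPd φ x ^ 2 / (d + 1) ≤ ∑ a : Dir L1, dbar h τ₀ τ a φ x ^ 2 :=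
  calc τ₀ ^ 2 * sumAbsPd φ x ^ 2 / (d + 1)
      = τ₀ ^ 2 * (sumAbsPd φ x ^ 2 / (d + 1)) := by ring
    _ ≤ τ₀ ^ 2 * ∑ i, pd i φ x ^ 2 := by
        gcongr
        simpa only [sumAbsPd, Finset.card_univ, Fintype.card_fin] using
          sq_sum_abs_div_card_add_one_le Finset.univ fun i => pd i φ x
    _ = ∑ i, dbar h τ₀ τ (Sum.inr i : Dir L1) φ x ^ 2 := by
        simp only [dbar, mul_pow, Finset.mul_sum]
    _ ≤ ∑ a : Dir L1, dbar h τ₀ τ a φ x ^ 2 := by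
        rw [Fintype.sum_sum_type]
        exact le_add_of_nonneg_left (Finset.sum_nonneg fun _ _ => sq_nonneg _)

end Coercivity

namespace SymmNondegCoeff

variable {κ c₀ P B τ₀ : ℝ} {τ : Vec d → ℝ} {q p : Vec d → Vec d → ℝ} {c : Vec d → ℝ}

lemma half_le_chi (H : SymmNondegCoeff L1 κ c₀ P B q p c) (hP : 0 ≤ P)
    (hh : h ∈ Set.Ioc 0 (κ / (2 * (P + 1)))) {l : Vec d} (hl : l ∈ L1) (x : Vec d) :
    κ / 2 ≤ q l x + h * p l x := by
  have small : h * (2 * (P + 1)) ≤ κ := (le_div_iff₀ (by positivity)).1 hh.2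
  have lower : h * -P ≤ h * p l x :=
    mul_le_mul_of_nonneg_left (neg_le_of_abs_le (H.abs_p_le l hl x)) hh.1.le
  linarith [H.le_q l hl x, hh.1]

lemma mul_sq_sumAbsPd_le (H : SymmNondegCoeff L1 κ c₀ P B q p c) (hc₀ : 0 ≤ c₀) (φ : Vec d → ℝ)
    (x : Vec d) : c₀ / (d + 1) * (τ₀ ^ 2 * sumAbsPd φ x ^ 2) ≤
      c x * ∑ a : Dir L1, dbar h τ₀ τ a φ x ^ 2 :=
  calc c₀ / (d + 1) * (τ₀ ^ 2 * sumAbsPd φ x ^ 2)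
      = c₀ * (τ₀ ^ 2 * sumAbsPd φ x ^ 2 / (d + 1)) := by ring
    _ ≤ c x * ∑ a : Dir L1, dbar h τ₀ τ a φ x ^ 2 :=
        mul_le_mul (H.le_c x) (sq_mul_sq_sumAbsPd_le_sum_sq_dbar φ) (by positivity)
          (hc₀.trans (H.le_c x))

lemma abs_L0mu_le (H : SymmNondegCoeff L1 κ c₀ P B q p c) (hneg : ∀ l ∈ L1, -l ∈ L1) (hB : 0 ≤ B)
    (hh : 0 < h) (a : Dir L1) (φ : Vec d → ℝ) (x : Vec d) :
    |L0mu h τ₀ τ L1 q p ![a] (shiftD h a φ) x| ≤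
      (2 + h) * (B * dirNorm τ₀ τ a) * (sumAbsDel h L1 φ x + sumAbsDelDel h L1 φ x) := by
  have even_q (l : Vec d) (hl : l ∈ L1) : dbar h τ₀ τ a (q (-l)) x = dbar h τ₀ τ a (q l) x :=
    dbar_congr_fderiv (H.differentiable_q _ (hneg l hl)) (H.differentiable_q l hl)
      (H.fderiv_q_neg l hl) a x
  have q_le (l : Vec d) (hl : l ∈ L1) : |dbar h τ₀ τ a (q l) x| ≤ B * dirNorm τ₀ τ a :=
    abs_dbar_le (H.differentiable_q l hl) (H.norm_fderiv_q_le l hl) hh a x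
  have p_le (l : Vec d) (hl : l ∈ L1) : |dbar h τ₀ τ a (p l) x| ≤ B * dirNorm τ₀ τ a :=
    abs_dbar_le (H.differentiable_p l hl) (H.norm_fderiv_p_le l hl) hh a x
  rw [L0mu_singleton]
  rcases a with k | i
  · exact abs_L0_shift_le hh hneg even_q q_le p_le k.2 φ
  · have S₁_nonneg := sumAbsDel_nonneg (h := h) (L1 := L1) φ x
    have S₂_nonneg := sumAbsDelDel_nonneg (h := h) (L1 := L1) φ x
    have dir_nonneg := dirNorm_nonneg (τ₀ := τ₀) (τ := τ) (Sum.inr i : Dir L1)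
    refine (abs_L0_le hneg even_q q_le p_le _).trans ?_
    exact mul_le_mul_of_nonneg_right
      (le_mul_of_one_le_left (mul_nonneg hB dir_nonneg) (by linarith)) (by positivity)

lemma A1form_le (H : SymmNondegCoeff L1 κ c₀ P B q p c) (hneg : ∀ l ∈ L1, -l ∈ L1) (hB : 0 ≤ B)
    {h₁ : ℝ} (hh : h ∈ Set.Ioc 0 h₁) (φ : Vec d → ℝ) (x : Vec d) :
    A1form h τ₀ τ L1 q p φ x ≤
      2 * (2 + h₁) * B * (sumAbsDel h L1 φ x + sumAbsDelDel h L1 φ x) *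
        ((∑ l ∈ L1, ‖τ l • l‖ * |τ l|) * sumAbsDel h L1 φ x + τ₀ ^ 2 * sumAbsPd φ x) := by
  have S_nonneg : 0 ≤ sumAbsDel h L1 φ x + sumAbsDelDel h L1 φ x :=
    add_nonneg (sumAbsDel_nonneg φ x) (sumAbsDelDel_nonneg φ x)
  set S := sumAbsDel h L1 φ x + sumAbsDelDel h L1 φ x
  have h₁_pos : 0 < h₁ := hh.1.trans_le hh.2
  have term_le (a : Dir L1) :
      dbar h τ₀ τ a φ x * L0mu h τ₀ τ L1 q p ![a] (shiftD h a φ) x ≤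
        (2 + h₁) * B * S * (dirNorm τ₀ τ a * |dbar h τ₀ τ a φ x|) := by
    have dir_nonneg := dirNorm_nonneg (τ₀ := τ₀) (τ := τ) a
    calc dbar h τ₀ τ a φ x * L0mu h τ₀ τ L1 q p ![a] (shiftD h a φ) x
        ≤ |dbar h τ₀ τ a φ x| * |L0mu h τ₀ τ L1 q p ![a] (shiftD h a φ) x| :=
          (le_abs_self _).trans_eq (abs_mul _ _)
      _ ≤ |dbar h τ₀ τ a φ x| * ((2 + h) * (B * dirNorm τ₀ τ a) * S) :=
          mul_le_mul_of_nonneg_left (H.abs_L0mu_le hneg hB hh.1 a φ x) (abs_nonneg _)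
      _ ≤ |dbar h τ₀ τ a φ x| * ((2 + h₁) * (B * dirNorm τ₀ τ a) * S) := by
          gcongr
          exact hh.2
      _ = (2 + h₁) * B * S * (dirNorm τ₀ τ a * |dbar h τ₀ τ a φ x|) := by ring
  calc A1form h τ₀ τ L1 q p φ x
      ≤ 2 * ∑ a : Dir L1, (2 + h₁) * B * S * (dirNorm τ₀ τ a * |dbar h τ₀ τ a φ x|) :=
        mul_le_mul_of_nonneg_left (Finset.sum_le_sum fun a _ => term_le a) zero_le_two
    _ = 2 * (2 + h₁) * B * S * ∑ a : Dir L1, dirNorm τ₀ τ a * |dbar h τ₀ τ a φ x| := by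
        rw [← Finset.mul_sum]; ring
    _ ≤ _ := by
        gcongr
        exact sum_dirNorm_mul_abs_dbar_le φ x

end SymmNondegCoeff

namespace CoefReg

variable {T κ c₀ : ℝ} {m : ℕ} {M : ℕ → ℝ} {q p : Vec d → ℝ → Vec d → ℝ} {c : ℝ → Vec d → ℝ}

lemma norm_iteratedFDeriv_le (H : CoefReg T L1 m q p c M) {k : ℕ} (hk : k ≤ m) {t : ℝ}
    (ht : t ∈ Set.Icc 0 T) {l : Vec d} (hl : l ∈ L1) (x : Vec d) :
    ‖iteratedFDeriv ℝ k (q l t) x‖ ≤ |M k| ∧ ‖iteratedFDeriv ℝ k (p l t) x‖ ≤ |M k| := by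
  obtain ⟨-, -, -, -, bound⟩ := H
  have term_le := Finset.single_le_sum
    (f := fun l => ‖iteratedFDeriv ℝ k (q l t) x‖ ^ 2 + ‖iteratedFDeriv ℝ k (p l t) x‖ ^ 2)
    (fun _ _ => by positivity) hl
  have sum_le := bound k hk t ht x
  have le_of_sq_le {r : ℝ} (hr : r ^ 2 ≤ M k ^ 2) : r ≤ |M k| :=
    (le_abs_self r).trans (sq_le_sq.1 hr)
  constructor <;> apply le_of_sq_le <;>
    linarith [sq_nonneg ‖iteratedFDeriv ℝ k (c t) x‖, sq_nonneg ‖iteratedFDeriv ℝ k (q l t) x‖,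
      sq_nonneg ‖iteratedFDeriv ℝ k (p l t) x‖]

lemma symmNondegCoeff (H : CoefReg T L1 m q p c M) (hm : 1 ≤ m) {t : ℝ} (ht : t ∈ Set.Icc 0 T)
    (hS' : ∀ l ∈ L1, ∀ x, fderiv ℝ (q l t) x = fderiv ℝ (q (-l) t) x)
    (hq : ∀ l ∈ L1, ∀ x, κ ≤ q l t x) (hc : ∀ x, c₀ ≤ c t x) :
    SymmNondegCoeff L1 κ c₀ |M 0| |M 1| (fun l => q l t) (fun l => p l t) (c t) where
  differentiable_q l hl := (H.1 l hl t ht).1.differentiable (by norm_cast; lia)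
  differentiable_p l hl := (H.1 l hl t ht).2.differentiable (by norm_cast; lia)
  norm_fderiv_q_le l hl x := norm_iteratedFDeriv_one (𝕜 := ℝ) (q l t) (x := x) ▸
    (H.norm_iteratedFDeriv_le hm ht hl x).1
  norm_fderiv_p_le l hl x := norm_iteratedFDeriv_one (𝕜 := ℝ) (p l t) (x := x) ▸
    (H.norm_iteratedFDeriv_le hm ht hl x).2
  abs_p_le l hl x := by
    simpa only [norm_iteratedFDeriv_zero, Real.norm_eq_abs] using
      (H.norm_iteratedFDeriv_le m.zero_le ht hl x).2
  fderiv_q_neg l hl x := (hS' l hl x).symm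
  le_q := hq
  le_c := hc

end CoefReg

end GK

open GK in
theorem stmt11_general {d : ℕ} {L1 : Finset (Vec d)} (hneg : ∀ l ∈ L1, -l ∈ L1) {τ : Vec d → ℝ}
    (hτ : ∀ l ∈ L1, 0 < τ l) {h₀ κ c₀ P B : ℝ} (hh₀ : 0 < h₀) (hκ : 0 < κ) (hc₀ : 0 < c₀)
    (hP : 0 ≤ P) (hB : 0 ≤ B) (m : ℕ) {δ : ℝ} (hδ : δ < 1) :
    ∃ τ₀ > 0, ∃ h₀' ∈ Set.Ioc 0 h₀, ∃ K₁ : ℝ, ∀ (q p : Vec d → Vec d → ℝ) (c : Vec d → ℝ),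
      SymmNondegCoeff L1 κ c₀ P B q p c → ∀ h ∈ Set.Ioc 0 h₀', ∀ φ, Differentiable ℝ φ →
        ∀ x, IneqA4 h τ₀ τ L1 q p c δ K₁ m (fun ψ => ψ) φ x := by
  obtain ⟨θ, hθ, hθτ⟩ := exists_pos_forall_mem_le hτ
  have hδ' : 0 < 1 - δ := sub_pos.2 hδ
  set h₁ := min h₀ (κ / (2 * (P + 1)))
  have h₁_pos : 0 < h₁ := lt_min hh₀ (by positivity)
  set a₁ := κ / 2 / (L1.card + 1)
  have a₁_pos : 0 < a₁ := by positivity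
  set a₂ := κ / 2 * θ ^ 2 / (L1.card + 1) ^ 2
  obtain ⟨τ₀, hτ₀, K, hK, absorb⟩ := exists_absorbing_constants
    (by positivity : 0 < (1 - δ) * a₂) (by positivity : 0 < 2 * (1 - δ) * (c₀ / (d + 1)))
    (m * (2 * (2 + h₁) * B)) (∑ l ∈ L1, ‖τ l • l‖ * |τ l|)
  refine ⟨τ₀, hτ₀, h₁, ⟨h₁_pos, min_le_left _ _⟩, K / a₁, fun q p c H h hh φ _ x => ?_⟩
  have hχ : ∀ l ∈ L1, κ / 2 ≤ q l x + h * p l x := fun l hl =>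
    H.half_le_chi hP ⟨hh.1, hh.2.trans (min_le_right _ _)⟩ hl x
  have A1_le := mul_le_mul_of_nonneg_left (H.A1form_le (τ₀ := τ₀) (τ := τ) hneg hB hh φ x)
    (Nat.cast_nonneg m)
  have second_order : (1 - δ) * a₂ * sumAbsDelDel h L1 φ x ^ 2 ≤
      (1 - δ) * ∑ a : Dir L1, Qform h L1 q p (dbar h τ₀ τ a φ) x := by
    rw [mul_assoc]
    exact mul_le_mul_of_nonneg_left
      (mul_sq_sumAbsDelDel_le_sum_Qform (by positivity) hχ hθ.le hθτ φ) hδ'.le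
  have first_order : K * sumAbsDel h L1 φ x ^ 2 ≤ K / a₁ * Qform h L1 q p φ x := by
    rw [div_mul_eq_mul_div, le_div_iff₀ a₁_pos, mul_assoc, mul_comm _ a₁]
    gcongr
    exact mul_sq_sumAbsDel_le_Qform (by positivity) hχ φ
  have gradient : 2 * (1 - δ) * (c₀ / (d + 1)) * (τ₀ ^ 2 * sumAbsPd φ x ^ 2) ≤
      2 * (1 - δ) * c x * ∑ a : Dir L1, dbar h τ₀ τ a φ x ^ 2 := by
    rw [mul_assoc, mul_assoc _ (c x)]
    exact mul_le_mul_of_nonneg_left (H.mul_sq_sumAbsPd_le hc₀.le φ x)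
      (mul_pos two_pos hδ').le
  rw [← mul_assoc, ← mul_assoc] at A1_le
  exact A1_le.trans <| (absorb _ _ _).trans <|
    add_le_add_three second_order first_order gradient

open GK in
/-- Remark 2.2, first claim: under (S′), `τ_λ > 0` and `q_λ ≥ κ > 0`, for any
`δ ∈ (0,1)` inequality (3.24.1) (Assumption A4) holds with the identity operator as
`𝒦`, for suitable `τ₀ > 0`, small enough `h₀'` and appropriate `K₁`. -/
theorem stmt11 {d : ℕ} (L1 : Finset (Vec d)) (hL1 : (0 : Vec d) ∉ L1)
    (τ : Vec d → ℝ) (hτ : ∀ l ∈ L1, 0 < τ l)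
    (h₀ T : ℝ) (hh₀ : 0 < h₀) (hT : 0 < T)
    (c₀ : ℝ) (hc₀ : 0 < c₀) (m : ℕ) (hm : 2 ≤ m) (M : ℕ → ℝ)
    (q p : Vec d → ℝ → Vec d → ℝ) (c : ℝ → Vec d → ℝ)
    -- Assumption A1(m)
    (hA1 : CoefReg T L1 m q p c M)
    -- Assumption A2
    (hA2 : ∀ t ∈ Set.Icc (0 : ℝ) T, ∀ x y : Vec d,
      (∑ l ∈ L1, q l t x • l) = ∑ l ∈ L1, q l t y • l)
    -- Assumption A3
    (hA3 : ∀ h ∈ Set.Ioc (0 : ℝ) h₀, ∀ l ∈ L1, ∀ t ∈ Set.Icc (0 : ℝ) T, ∀ x,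
      0 ≤ q l t x + h * p l t x)
    (hc : ∀ t ∈ Set.Icc (0 : ℝ) T, ∀ x, c₀ ≤ c t x)
    -- condition (S′)
    (hS' : ∀ l ∈ L1, -l ∈ L1 ∧ ∀ t ∈ Set.Icc (0 : ℝ) T, ∀ x,
      fderiv ℝ (q l t) x = fderiv ℝ (q (-l) t) x)
    -- uniform nondegeneracy `q_λ ≥ κ > 0`
    (κ : ℝ) (hκ : 0 < κ)
    (hq : ∀ l ∈ L1, ∀ t ∈ Set.Icc (0 : ℝ) T, ∀ x, κ ≤ q l t x) :
    ∀ δ ∈ Set.Ioo (0 : ℝ) 1, ∃ τ₀ > (0 : ℝ), ∃ h₀' ∈ Set.Ioc (0 : ℝ) h₀, ∃ K₁ : ℝ,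
      ∀ h ∈ Set.Ioc (0 : ℝ) h₀', ∀ φ : Vec d → ℝ, ContDiff ℝ (⊤ : ℕ∞) φ →
        ∀ t ∈ Set.Icc (0 : ℝ) T, ∀ x,
          IneqA4 h τ₀ τ L1 (fun l => q l t) (fun l => p l t) (c t) δ K₁ m
            (fun ψ => ψ) φ x := by
  intro δ hδ
  obtain ⟨τ₀, hτ₀, h₀', hh₀', K₁, ineq⟩ := stmt11_general (fun l hl => (hS' l hl).1) hτ hh₀ hκ hc₀
    (abs_nonneg (M 0)) (abs_nonneg (M 1)) m hδ.2
  exact ⟨τ₀, hτ₀, h₀', hh₀', K₁, fun h hh φ hφ t ht x => ineq _ _ _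
    (hA1.symmNondegCoeff (by lia) ht (fun l hl => (hS' l hl).2 t ht) (fun l hl => hq l hl t ht)
      (hc t ht)) h hh φ (hφ.differentiable (by simp)) x⟩
end
end
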